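/- The polynomial F(x) = x^9 + 289·x + 34 is irreducible over ℚ, and the number field K = ℚ(θ) for θ a root of F satisfies: 2 is a common index divisor of K, i.e., 2 divides (ℤ_K : ℤ[η]) for every algebraic integer η generating K. In particular K is not monogenic. -/

import Mathlib

open Polynomial NumberField

/-!
A ring with more than `p` homomorphisms to `𝔽_p` has `p` as a common index divisor: two of them
agree at `η`, hence on `ℤ[η]`, whereas homomorphisms to `𝔽_p` are determined by their values on an
additive subgroup of index prime to `p`. So it suffices to find three primes of norm `2` in `ℤ_K`.

The minimal polynomial of `Y = θ + 1` is `X * Q + p ^ 2 * e` with `Q = X ^ s * (X - 1) + p * H`,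
where `p = 2`, `s = 7` and `p ∤ H(0)`, so that its Newton polygon at `p` has three sides. Here
`T = Q(Y) / p` is integral, and every polynomial relation between `Y` and `T` over `ℤ` also holds at
the points `(1, 0)`, `(0, H(0))` and `(0, 0)` of `𝔽_p²`, so there are primes lying over these
points. As `p * (T - H(Y)) = Y ^ s * (Y - 1)` and `T - H(Y)` is a unit at the prime over `(0, 0)`,
`p` lies in the `s`-th power of that prime. Since `1 + 1 + s` is the degree of `K`, all three primes
have norm `p`.
-/

section IndexDivisor

variable {p : ℕ} {R : Type*} [CommRing R]

theorem addMonoidHom_eq_of_eqOn_of_not_dvd_index [Fact p.Prime] {A : Type*} [AddCommGroup A]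
    {φ ψ : A →+ ZMod p} {B : AddSubgroup A} (hB : ¬ p ∣ B.index) (h : Set.EqOn φ ψ B) :
    φ = ψ := by
  ext x
  have hx := h (B.nsmul_index_mem x)
  rw [map_nsmul, map_nsmul, nsmul_eq_mul, nsmul_eq_mul] at hx
  exact mul_left_cancel₀ (by rwa [Ne, ZMod.natCast_eq_zero_iff]) hx

theorem dvd_index_adjoin_singleton_of_lt_card_ringHom [Fact p.Prime] {ι : Type*} [Fintype ι]
    (hι : p < Fintype.card ι) {φ : ι → R →+* ZMod p} (hφ : Function.Injective φ) (η : R) :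
    p ∣ (Algebra.adjoin ℤ {η}).toSubring.toAddSubgroup.index := by
  by_contra hindex
  obtain ⟨i, j, hij, hη⟩ :=
    Fintype.exists_ne_map_eq_of_card_lt (fun i => φ i η) (by rwa [ZMod.card])
  have hadjoin : Algebra.adjoin ℤ {η} ≤
      AlgHom.equalizer (φ i).toIntAlgHom (φ j).toIntAlgHom :=
    AlgHom.adjoin_le_equalizer _ _ (by simpa using hη)
  have hadd : (φ i).toAddMonoidHom = (φ j).toAddMonoidHom :=
    addMonoidHom_eq_of_eqOn_of_not_dvd_index hindex hadjoin
  exact hij (hφ (RingHom.coe_addMonoidHom_injective hadd))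

theorem exists_ringHom_zmod_ker_eq (hp : p.Prime) {P : Ideal R} (hP : Nat.card (R ⧸ P) = p) :
    ∃ φ : R →+* ZMod p, RingHom.ker φ = P := by
  have : Finite (R ⧸ P) := Nat.finite_of_card_ne_zero (hP ▸ hp.ne_zero)
  have := Fintype.ofFinite (R ⧸ P)
  let e := ZMod.ringEquivOfPrime (R ⧸ P) hp (by rw [← Nat.card_eq_fintype_card, hP])
  refine ⟨(e.symm : R ⧸ P →+* ZMod p).comp (Ideal.Quotient.mk P), ?_⟩
  exact (RingHom.ker_equiv_comp _ e.symm).trans Ideal.mk_ker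

theorem dvd_index_adjoin_singleton_of_lt_card_ideal (hp : p.Prime) {ι : Type*} [Fintype ι]
    (hι : p < Fintype.card ι) {P : ι → Ideal R} (hP : Function.Injective P)
    (hcard : ∀ i, Nat.card (R ⧸ P i) = p) (η : R) :
    p ∣ (Algebra.adjoin ℤ {η}).toSubring.toAddSubgroup.index := by
  have := Fact.mk hp
  choose φ hφ using fun i => exists_ringHom_zmod_ker_eq hp (hcard i)
  exact dvd_index_adjoin_singleton_of_lt_card_ringHom hι (φ := φ)
    (fun i j hij => hP (by rw [← hφ i, ← hφ j, hij])) η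

theorem adjoin_singleton_ne_top_of_dvd_index (hp : p ≠ 1) {η : R}
    (h : p ∣ (Algebra.adjoin ℤ {η}).toSubring.toAddSubgroup.index) :
    Algebra.adjoin ℤ {η} ≠ ⊤ := by
  intro htop
  rw [htop, Algebra.top_toSubring] at h
  exact hp (Nat.dvd_one.1 (by simpa using h))

end IndexDivisor

theorem dvd_of_sq_eq_mul_add {R : Type*} [CommRing R] [IsDomain R] [IsIntegrallyClosed R]
    {r x a b : R} (h : x ^ 2 = r * a * x + r ^ 2 * b) : r ∣ x := by
  rcases eq_or_ne r 0 with rfl | hr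
  · simpa using h
  have hr' : algebraMap R (FractionRing R) r ≠ 0 := by simpa using hr
  have hint : IsIntegral R (algebraMap R (FractionRing R) x / algebraMap R (FractionRing R) r) := by
    refine ⟨X ^ 2 - (C a * X + C b), by monicity!, ?_⟩
    have h' := congrArg (algebraMap R (FractionRing R)) h
    simp only [map_add, map_mul, map_pow] at h'
    simp only [eval₂_sub, eval₂_add, eval₂_mul, eval₂_pow, eval₂_X, eval₂_C]
    field_simp
    linear_combination h'
  obtain ⟨y, hy⟩ := IsIntegrallyClosed.isIntegral_iff.1 hint
  refine ⟨y, IsFractionRing.injective R (FractionRing R) ?_⟩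
  rw [map_mul, hy, mul_div_cancel₀ _ hr']

theorem exists_isPrime_mem_iff_of_ker_le {R A S k : Type*} [CommRing R] [CommRing A] [CommRing S]
    [CommRing k] [IsDomain k] [Algebra R A] [Algebra R S] [Algebra R k] [Algebra.IsIntegral R S]
    {f : A →ₐ[R] S} {χ : A →ₐ[R] k} (h : RingHom.ker f ≤ RingHom.ker χ) :
    ∃ P : Ideal S, P.IsPrime ∧ ∀ a, f a ∈ P ↔ χ a = 0 := by
  algebraize [f.toRingHom]
  have : IsScalarTower R A S := .of_algHom f
  have : Algebra.IsIntegral A S := .tower_top R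
  have := RingHom.ker_isPrime χ
  obtain ⟨P, -, hP, hcomap⟩ :=
    Ideal.exists_ideal_over_prime_of_isIntegral (RingHom.ker χ) (⊥ : Ideal S) h
  exact ⟨P, hP, fun a => by rw [← RingHom.mem_ker, ← hcomap]; rfl⟩

section AbsNorm

variable {S : Type*} [CommRing S] [IsDedekindDomain S] [Module.Free ℤ S] [Module.Finite ℤ S]

theorem le_absNorm_of_natCast_mem {p : ℕ} (hp : p.Prime) {P : Ideal S} (hP : P ≠ ⊤)
    (hmem : (p : S) ∈ P) :
    p ≤ P.absNorm := by
  have hdvd : P.absNorm ∣ p ^ Module.finrank ℤ S := by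
    rw [← Ideal.absNorm_span_natCast]
    exact Ideal.absNorm_dvd_absNorm_of_le ((Ideal.span_singleton_le_iff_mem _).2 hmem)
  obtain ⟨k, -, hk⟩ := (Nat.dvd_prime_pow hp).1 hdvd
  rw [hk]
  refine Nat.le_self_pow ?_ p
  rintro rfl
  exact hP (Ideal.absNorm_eq_one_iff.1 hk)

theorem absNorm_eq_of_mem_pow_of_finrank_le_sum {p : ℕ} (hp : p.Prime) {ι : Type*} [Fintype ι]
    {P : ι → Ideal S} (hP : Function.Injective P) (hprime : ∀ i, (P i).IsPrime) {k : ι → ℕ}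
    (hk : ∀ i, k i ≠ 0) (hmem : ∀ i, (p : S) ∈ P i ^ k i)
    (hsum : Module.finrank ℤ S ≤ ∑ i, k i) (i : ι) :
    (P i).absNorm = p := by
  have hle : ∀ i, p ≤ (P i).absNorm := fun i =>
    le_absNorm_of_natCast_mem hp (hprime i).ne_top (Ideal.pow_le_self (hk i) (hmem i))
  have hmax : ∀ i, (P i).IsMaximal := fun i => (hprime i).isMaximal fun hbot =>
    hp.ne_zero (by simpa [hbot] using hle i)
  have hdvd : ∏ i, P i ^ k i ∣ Ideal.span {(p : S)} :=
    Fintype.prod_dvd_of_coprime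
      (fun i j hij => (Ideal.isCoprime_of_isMaximal (hP.ne hij)).pow)
      fun i => Ideal.dvd_span_singleton.2 (hmem i)
  have hprod : ∏ i, (P i).absNorm ^ k i ≤ ∏ i, p ^ k i := by
    have hnorm := map_dvd Ideal.absNorm hdvd
    rw [map_prod, Ideal.absNorm_span_natCast] at hnorm
    simp only [map_pow] at hnorm
    rw [Finset.prod_pow_eq_pow_sum]
    exact (Nat.le_of_dvd (pow_pos hp.pos _) hnorm).trans (Nat.pow_le_pow_right hp.pos hsum)
  by_contra hne
  exact hprod.not_gt <| Finset.prod_lt_prod (fun j _ => pow_pos hp.pos _)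
    (fun j _ => Nat.pow_le_pow_left (hle j) _)
    ⟨i, Finset.mem_univ i, Nat.pow_lt_pow_left ((hle i).lt_of_ne' hne) (hk i)⟩

end AbsNorm

theorem minpoly_eq_of_irreducible_of_monic {R S : Type*} [CommRing R] [CommRing S] [IsDomain R]
    [IsDomain S] [IsIntegrallyClosed R] [Algebra R S] [Module.IsTorsionFree R S] {x : S} {f : R[X]}
    (hirr : Irreducible f) (hx : aeval x f = 0) (hf : f.Monic) : minpoly R x = f := by
  have hint : IsIntegral R x := ⟨f, hf, hx⟩
  refine eq_of_monic_of_associated (minpoly.monic hint) hf ?_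
  exact (minpoly.irreducible hint).associated_of_dvd hirr (minpoly.isIntegrallyClosed_dvd hint hx)

theorem irreducible_comp_X_sub_C {R : Type*} [CommRing R] {f : R[X]} (hf : Irreducible f) (r : R) :
    Irreducible (f.comp (X - C r)) := by
  rw [← MulEquiv.irreducible_iff (algEquivAevalXAddC (-r))] at hf
  rwa [algEquivAevalXAddC_apply, C_neg, ← sub_eq_add_neg] at hf

theorem finrank_eq_natDegree_of_adjoin_eq_top {K : Type*} [Field K] [NumberField K] {θ : 𝓞 K}
    (hθ : Algebra.adjoin ℚ {(θ : K)} = ⊤) :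
    Module.finrank ℚ K = (minpoly ℤ θ).natDegree := by
  rw [(PowerBasis.ofAdjoinEqTop (IsIntegral.of_finite ℚ (θ : K)) hθ).finrank,
    PowerBasis.ofAdjoinEqTop_dim,
    minpoly.isIntegrallyClosed_eq_field_fractions ℚ K (RingOfIntegers.isIntegral θ),
    (minpoly.monic (RingOfIntegers.isIntegral θ)).natDegree_map]

theorem exists_aeval_pair_eq {A S : Type*} [CommRing A] [CommRing S] [Algebra A S] {y t : S}
    {d m : A} {q : A[X]} (hyt : y * t = algebraMap A S d)
    (htt : t ^ 2 = algebraMap A S m * t + aeval y q) (f : MvPolynomial (Fin 2) A) :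
    ∃ (g : A[X]) (n : A), MvPolynomial.aeval ![y, t] f = aeval y g + algebraMap A S n * t := by
  induction f using MvPolynomial.induction_on with
  | C a => exact ⟨C a, 0, by simp⟩
  | add f₁ f₂ h₁ h₂ =>
    obtain ⟨g₁, n₁, h₁⟩ := h₁
    obtain ⟨g₂, n₂, h₂⟩ := h₂
    exact ⟨g₁ + g₂, n₁ + n₂, by simp only [map_add, h₁, h₂]; ring⟩
  | mul_X f i h =>
    obtain ⟨g, n, h⟩ := h
    rw [map_mul, MvPolynomial.aeval_X, h]
    fin_cases i
    · refine ⟨g * X + C (n * d), 0, ?_⟩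
      simp only [map_add, map_mul, map_zero, aeval_X, aeval_C, ← hyt, Fin.zero_eta,
        Matrix.cons_val_zero]
      ring
    · refine ⟨C d * g.divX + C n * q, g.coeff 0 + n * m, ?_⟩
      have hg := congrArg (aeval y) g.X_mul_divX_add
      simp only [map_add, map_mul, aeval_X, aeval_C] at hg
      simp only [map_add, map_mul, aeval_C, ← hg, Fin.mk_one, Matrix.cons_val_one,
        Matrix.cons_val_zero]
      linear_combination aeval y g.divX * hyt + algebraMap A S n * htt

theorem mvPolynomial_aeval_pair_prod {A S S' : Type*} [CommRing A] [CommRing S] [CommRing S']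
    [Algebra A S] [Algebra A S'] (y t : S) (y' t' : S') (f : MvPolynomial (Fin 2) A) :
    MvPolynomial.aeval ![(y, y'), (t, t')] f =
      (MvPolynomial.aeval ![y, t] f, MvPolynomial.aeval ![y', t'] f) := by
  have hprod : MvPolynomial.aeval ![(y, y'), (t, t')] =
      (MvPolynomial.aeval (R := A) ![y, t]).prod (MvPolynomial.aeval ![y', t']) :=
    MvPolynomial.algHom_ext fun i => by fin_cases i <;> simp
  exact AlgHom.congr_fun hprod f

/-- The polynomial `Q = X ^ s * (X - 1) + p * H`: for `p ∤ H(0)` its Newton polygon at `p` has the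
two sides of slopes `-1 / s` and `0`. -/
noncomputable def threeSlopeFactor (p s : ℕ) (H : ℤ[X]) : ℤ[X] :=
  X ^ s * (X - 1) + C (p : ℤ) * H

/-- The polynomial `X * Q + p ^ 2 * e` for the `Q` of `threeSlopeFactor`: for `s ≥ 2`, `p ∤ H(0)`
and `e ≠ 0` its Newton polygon at `p` has three sides, over `[0, 1]`, `[1, s + 1]` and
`[s + 1, s + 2]`. -/
noncomputable def threeSlopePoly (p s : ℕ) (H : ℤ[X]) (e : ℤ) : ℤ[X] :=
  X * threeSlopeFactor p s H + C (p ^ 2 * e : ℤ)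

section ThreeSlope

variable {p s : ℕ} {H : ℤ[X]} {e : ℤ}

theorem aeval_threeSlopeFactor {R : Type*} [CommRing R] (Y : R) :
    aeval Y (threeSlopeFactor p s H) = Y ^ s * (Y - 1) + p * aeval Y H := by
  simp [threeSlopeFactor]

theorem aeval_threeSlopePoly {R : Type*} [CommRing R] (Y : R) :
    aeval Y (threeSlopePoly p s H e) = Y * aeval Y (threeSlopeFactor p s H) + p ^ 2 * e := by
  simp [threeSlopePoly]

theorem aeval_threeSlopeFactor_eq_add {R : Type*} [CommRing R] (Y : R) (hs : s ≠ 0) :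
    aeval Y (threeSlopeFactor p s H) =
      Y * aeval Y (threeSlopeFactor p (s - 1) H.divX) + p * H.coeff 0 := by
  obtain ⟨s, rfl⟩ := Nat.exists_eq_succ_of_ne_zero hs
  have hH := congrArg (aeval Y) H.X_mul_divX_add
  simp only [eq_intCast, map_add, map_mul, aeval_X, map_intCast] at hH
  rw [aeval_threeSlopeFactor, aeval_threeSlopeFactor, ← hH, Nat.succ_sub_one, pow_succ]
  ring

theorem aeval_threeSlopeFactor_zmod_eq_zero (hs : s ≠ 0) {u : ZMod p} (hu : u * (u - 1) = 0) :
    aeval u (threeSlopeFactor p s H) = 0 := by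
  obtain ⟨s, rfl⟩ := Nat.exists_eq_succ_of_ne_zero hs
  simp [aeval_threeSlopeFactor, pow_succ, mul_assoc, hu]

section Domain

variable {R : Type*} [CommRing R] [IsDomain R] {Y T : R}

theorem exists_natCast_mul_eq_aeval_threeSlopeFactor [IsIntegrallyClosed R] (hs : s ≠ 0)
    (hY : aeval Y (threeSlopePoly p s H e) = 0) :
    ∃ T : R, p * T = aeval Y (threeSlopeFactor p s H) := by
  rw [aeval_threeSlopePoly] at hY
  have hsplit := aeval_threeSlopeFactor_eq_add (p := p) (H := H) Y hs
  obtain ⟨T, hT⟩ := dvd_of_sq_eq_mul_add (r := (p : R)) (x := aeval Y (threeSlopeFactor p s H))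
    (a := H.coeff 0) (b := -e * aeval Y (threeSlopeFactor p (s - 1) H.divX)) (by
      linear_combination aeval Y (threeSlopeFactor p s H) * hsplit +
        aeval Y (threeSlopeFactor p (s - 1) H.divX) * hY)
  exact ⟨T, hT.symm⟩

variable [CharZero R]

theorem root_mul_eq_of_natCast_mul_eq (hp : p ≠ 0) (hY : aeval Y (threeSlopePoly p s H e) = 0)
    (hT : p * T = aeval Y (threeSlopeFactor p s H)) : Y * T = -(p * e) := by
  rw [aeval_threeSlopePoly] at hY
  apply mul_left_cancel₀ (Nat.cast_ne_zero.2 hp : (p : R) ≠ 0)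
  linear_combination hY + Y * hT

theorem sq_eq_of_natCast_mul_eq (hp : p ≠ 0) (hs : s ≠ 0)
    (hY : aeval Y (threeSlopePoly p s H e) = 0) (hT : p * T = aeval Y (threeSlopeFactor p s H)) :
    T ^ 2 = H.coeff 0 * T - e * aeval Y (threeSlopeFactor p (s - 1) H.divX) := by
  apply mul_left_cancel₀ (Nat.cast_ne_zero.2 hp : (p : R) ≠ 0)
  linear_combination T * hT + T * aeval_threeSlopeFactor_eq_add (p := p) (H := H) Y hs +
    aeval Y (threeSlopeFactor p (s - 1) H.divX) * root_mul_eq_of_natCast_mul_eq hp hY hT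

theorem dvd_of_aeval_add_mul_eq_zero (hp : p.Prime) (hint : IsIntegral ℤ Y)
    (hY : minpoly ℤ Y = threeSlopePoly p s H e)
    (hT : p * T = aeval Y (threeSlopeFactor p s H)) {g : ℤ[X]} {n : ℤ}
    (h : aeval Y g + n * T = 0) : (p : ℤ) ∣ n := by
  have := Fact.mk hp
  have hdvd : threeSlopePoly p s H e ∣ C (p : ℤ) * g + C n * threeSlopeFactor p s H := by
    rw [← hY]
    refine minpoly.isIntegrallyClosed_dvd hint ?_
    simp only [map_natCast, eq_intCast, map_add, map_mul, map_intCast, ← hT]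
    linear_combination (p : R) * h
  have hmod := Polynomial.map_dvd (Int.castRingHom (ZMod p)) hdvd
  have hX : X ^ s * (X - 1) * X ∣ X ^ s * (X - 1) * C (n : ZMod p) := by
    simpa [threeSlopePoly, threeSlopeFactor, mul_comm] using hmod
  have hne : (X ^ s * (X - 1) : (ZMod p)[X]) ≠ 0 :=
    mul_ne_zero (pow_ne_zero _ X_ne_zero) (X_sub_C_ne_zero 1)
  rwa [mul_dvd_mul_iff_left hne, X_dvd_iff, coeff_C_zero, ZMod.intCast_zmod_eq_zero_iff_dvd] at hX

theorem aeval_zmod_add_mul_eq_zero (hp : p.Prime) (hs : s ≠ 0) (hint : IsIntegral ℤ Y)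
    (hY : minpoly ℤ Y = threeSlopePoly p s H e)
    (hT : p * T = aeval Y (threeSlopeFactor p s H)) {u w : ZMod p} (hu : u * (u - 1) = 0)
    {g : ℤ[X]} {n : ℤ} (h : aeval Y g + n * T = 0) : aeval u g + n * w = 0 := by
  obtain ⟨n, rfl⟩ := dvd_of_aeval_add_mul_eq_zero hp hint hY hT h
  obtain ⟨c, hc⟩ : threeSlopePoly p s H e ∣ g + C n * threeSlopeFactor p s H := by
    rw [← hY]
    refine minpoly.isIntegrallyClosed_dvd hint ?_
    simp only [eq_intCast, map_add, map_mul, map_intCast, ← hT]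
    push_cast at h
    linear_combination h
  have hcu := congrArg (aeval u) hc
  simp only [eq_intCast, map_add, map_mul, map_intCast, aeval_threeSlopePoly,
    aeval_threeSlopeFactor_zmod_eq_zero hs hu, CharP.cast_eq_zero, mul_zero, add_zero, zero_mul,
    zero_pow two_ne_zero] at hcu
  simp [hcu]

theorem ker_aeval_le_ker_aeval_zmod (hp : p.Prime) (hs : 2 ≤ s) (hint : IsIntegral ℤ Y)
    (hY : minpoly ℤ Y = threeSlopePoly p s H e)
    (hT : p * T = aeval Y (threeSlopeFactor p s H)) {u w : ZMod p} (hu : u * (u - 1) = 0)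
    (hw : w * (w - H.coeff 0) = 0) (huw : u * w = 0) :
    RingHom.ker (MvPolynomial.aeval (R := ℤ) ![Y, T]) ≤
      RingHom.ker (MvPolynomial.aeval (R := ℤ) ![u, w]) := by
  intro f hf
  rw [RingHom.mem_ker] at hf ⊢
  have hs0 : s ≠ 0 := by omega
  have hroot : aeval Y (threeSlopePoly p s H e) = 0 := hY ▸ minpoly.aeval ℤ Y
  have hu' := aeval_threeSlopeFactor_zmod_eq_zero (s := s - 1) (H := H.divX) (by omega) hu
  have hYT := root_mul_eq_of_natCast_mul_eq hp.ne_zero hroot hT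
  have hTT := sq_eq_of_natCast_mul_eq hp.ne_zero hs0 hroot hT
  -- Working in `R × ZMod p` makes the reduced forms of `f` at `(Y, T)` and at `(u, w)` the same.
  obtain ⟨g, n, h⟩ := exists_aeval_pair_eq (S := R × ZMod p) (y := (Y, u)) (t := (T, w))
    (d := -(p * e)) (m := H.coeff 0) (q := -C e * threeSlopeFactor p (s - 1) H.divX)
    (by ext <;> simp [hYT, huw])
    (by
      rw [aeval_prod_apply]
      ext
      · simp [hTT, sub_eq_add_neg]
      · simp only [Prod.pow_mk, eq_intCast, neg_mul, aeval_neg, map_mul, map_intCast, hu', mul_zero,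
          neg_zero, Prod.snd_add, Prod.snd_mul, Prod.snd_intCast, add_zero]
        linear_combination hw) f
  rw [mvPolynomial_aeval_pair_prod, aeval_prod_apply] at h
  obtain ⟨hfst, hsnd⟩ := Prod.ext_iff.1 h
  exact hsnd.trans (aeval_zmod_add_mul_eq_zero hp hs0 hint hY hT hu (hfst.symm.trans hf))

theorem exists_isPrime_aeval_mem_iff [Algebra.IsIntegral ℤ R] (hp : p.Prime) (hs : 2 ≤ s)
    (hY : minpoly ℤ Y = threeSlopePoly p s H e)
    (hT : p * T = aeval Y (threeSlopeFactor p s H)) {u w : ZMod p} (hu : u * (u - 1) = 0)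
    (hw : w * (w - H.coeff 0) = 0) (huw : u * w = 0) :
    ∃ P : Ideal R, P.IsPrime ∧ ∀ f : MvPolynomial (Fin 2) ℤ,
      MvPolynomial.aeval ![Y, T] f ∈ P ↔ MvPolynomial.aeval ![u, w] f = 0 := by
  have := Fact.mk hp
  exact exists_isPrime_mem_iff_of_ker_le
    (ker_aeval_le_ker_aeval_zmod hp hs (Algebra.IsIntegral.isIntegral Y) hY hT hu hw huw)

end Domain

section Dedekind

variable {S : Type*} [CommRing S] [IsDedekindDomain S] {Y T : S}

theorem natCast_mem_pow_of_mem {P : Ideal S} [P.IsPrime]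
    (hT : p * T = aeval Y (threeSlopeFactor p s H)) (hYmem : Y ∈ P)
    (hTmem : T - aeval Y H ∉ P) : (p : S) ∈ P ^ s := by
  refine (Ideal.IsPrime.mem_pow_mul P (b := T - aeval Y H) ?_).resolve_right hTmem
  rw [aeval_threeSlopeFactor] at hT
  rw [mul_sub, hT, add_sub_cancel_right]
  exact Ideal.mul_mem_right _ _ (Ideal.pow_mem_pow hYmem s)

variable [CharZero S]

theorem exists_isPrime_natCast_mem_pow [Algebra.IsIntegral ℤ S] (hp : p.Prime) (hs : 2 ≤ s)
    (hH : ¬ (p : ℤ) ∣ H.coeff 0) (hY : minpoly ℤ Y = threeSlopePoly p s H e) :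
    ∃ P : Fin 3 → Ideal S, Function.Injective P ∧ (∀ i, (P i).IsPrime) ∧
      ∀ i, (p : S) ∈ P i ^ ![1, 1, s] i := by
  have := Fact.mk hp
  have hroot : aeval Y (threeSlopePoly p s H e) = 0 := hY ▸ minpoly.aeval ℤ Y
  obtain ⟨T, hT⟩ := exists_natCast_mul_eq_aeval_threeSlopeFactor (by omega) hroot
  have hcoeff : (H.coeff 0 : ZMod p) ≠ 0 := by rwa [Ne, ZMod.intCast_zmod_eq_zero_iff_dvd]
  let u : Fin 3 → ZMod p := ![1, 0, 0]
  let w : Fin 3 → ZMod p := ![0, H.coeff 0, 0]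
  have hex : ∀ i, ∃ P : Ideal S, P.IsPrime ∧ ∀ f : MvPolynomial (Fin 2) ℤ,
      MvPolynomial.aeval ![Y, T] f ∈ P ↔ MvPolynomial.aeval ![u i, w i] f = 0 := fun i =>
    exists_isPrime_aeval_mem_iff hp hs hY hT
      (by fin_cases i <;> simp [u]) (by fin_cases i <;> simp [w])
      (by fin_cases i <;> simp [u, w])
  choose P hP hmem using hex
  have hYmem : ∀ i, Y ∈ P i ↔ u i = 0 := fun i => by simpa using hmem i (MvPolynomial.X 0)
  have hTmem : ∀ i, T ∈ P i ↔ w i = 0 := fun i => by simpa using hmem i (MvPolynomial.X 1)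
  have hpmem : ∀ i, (p : S) ∈ P i := fun i => by simpa using hmem i (p : MvPolynomial (Fin 2) ℤ)
  have hinj : Function.Injective P := by
    intro i j hij
    have hu : u i = 0 ↔ u j = 0 := by rw [← hYmem, ← hYmem, hij]
    have hw : w i = 0 ↔ w j = 0 := by rw [← hTmem, ← hTmem, hij]
    fin_cases i <;> fin_cases j <;> simp_all [u, w]
  have hTHmem : T - aeval Y H ∉ P 2 := fun h => hcoeff <| by
    have hTH := (hmem 2 (MvPolynomial.X 1 - Polynomial.aeval (MvPolynomial.X 0) H)).1 (by
      rwa [map_sub, MvPolynomial.aeval_X, ← aeval_algHom_apply, MvPolynomial.aeval_X])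
    rw [map_sub, MvPolynomial.aeval_X, ← aeval_algHom_apply, MvPolynomial.aeval_X] at hTH
    simpa [u, w, ← coeff_zero_eq_aeval_zero'] using hTH
  have hpow : (p : S) ∈ P 2 ^ s :=
    have := hP 2
    natCast_mem_pow_of_mem hT ((hYmem 2).2 rfl) hTHmem
  exact ⟨P, hinj, hP, fun i => by fin_cases i <;> simp [hpmem, hpow]⟩

theorem exists_ideal_card_quotient_eq [Module.Free ℤ S] [Module.Finite ℤ S] (hp : p.Prime)
    (hs : 2 ≤ s) (hH : ¬ (p : ℤ) ∣ H.coeff 0) (hY : minpoly ℤ Y = threeSlopePoly p s H e)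
    (hrank : Module.finrank ℤ S = s + 2) :
    ∃ P : Fin 3 → Ideal S, Function.Injective P ∧ ∀ i, Nat.card (S ⧸ P i) = p := by
  obtain ⟨P, hinj, hprime, hmem⟩ := exists_isPrime_natCast_mem_pow hp hs hH hY
  have hpos : ∀ i, ![1, 1, s] i ≠ 0 := by simp [Fin.forall_fin_succ]; omega
  have hsum : Module.finrank ℤ S ≤ ∑ i, ![1, 1, s] i := by
    rw [hrank, Fin.sum_univ_three]
    exact (by omega : s + 2 ≤ 1 + 1 + s)
  refine ⟨P, hinj, fun i => ?_⟩
  rw [← Submodule.cardQuot_apply, ← Ideal.absNorm_apply]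
  exact absNorm_eq_of_mem_pow_of_finrank_le_sum hp hinj hprime hpos hmem hsum i

end Dedekind

end ThreeSlope

theorem dvd_index_of_minpoly_eq_threeSlopePoly {K : Type*} [Field K] [NumberField K] {s : ℕ}
    {H : ℤ[X]} {e : ℤ} {Y : 𝓞 K} (hs : 2 ≤ s) (hH : Odd (H.coeff 0))
    (hY : minpoly ℤ Y = threeSlopePoly 2 s H e) (hrank : Module.finrank ℚ K = s + 2) (η : 𝓞 K) :
    2 ∣ (Algebra.adjoin ℤ {η}).toSubring.toAddSubgroup.index := by
  obtain ⟨P, hP, hcard⟩ := exists_ideal_card_quotient_eq Nat.prime_two hs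
    (by rwa [Nat.cast_two, Int.two_dvd_ne_zero, ← Int.odd_iff]) hY
    (by rwa [RingOfIntegers.rank])
  exact dvd_index_adjoin_singleton_of_lt_card_ideal Nat.prime_two (by simp) hP hcard η

theorem coeff_one_threeSlopePoly {p s : ℕ} (hs : 2 ≤ s) (H : ℤ[X]) (e : ℤ) :
    (threeSlopePoly p s H e).coeff 1 = p * H.coeff 0 := by
  rw [threeSlopePoly, threeSlopeFactor, coeff_add, coeff_X_mul, coeff_add, coeff_C_mul,
    mul_coeff_zero, coeff_X_pow, if_neg (by omega), coeff_C_of_ne_zero one_ne_zero, zero_mul,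
    zero_add, add_zero]

theorem exists_eq_threeSlopePoly {p s : ℕ} {G : ℤ[X]}
    (hmap : G.map (Int.castRingHom (ZMod p)) = X ^ (s + 1) * (X - 1))
    (hcoeff : (p : ℤ) ^ 2 ∣ G.coeff 0) :
    ∃ (H : ℤ[X]) (e : ℤ), G = threeSlopePoly p s H e := by
  obtain ⟨e, he⟩ := hcoeff
  have hmap' : G.divX.map (Int.castRingHom (ZMod p)) = X ^ s * (X - 1) := by
    refine isRegular_X.left ?_
    simp only [← mul_assoc, ← pow_succ', ← hmap]
    conv_rhs => rw [← G.X_mul_divX_add]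
    simp [he]
  have hdivX : C (p : ℤ) ∣ G.divX - X ^ s * (X - 1) := by
    refine (C_dvd_iff_dvd_coeff _ _).2 fun i => ?_
    rw [← ZMod.intCast_zmod_eq_zero_iff_dvd, ← eq_intCast (Int.castRingHom (ZMod p)), ← coeff_map]
    simp [hmap']
  obtain ⟨H, hH⟩ := hdivX
  refine ⟨H, e, ?_⟩
  rw [threeSlopePoly, threeSlopeFactor, ← hH, ← he, add_sub_cancel, X_mul_divX_add]

section Trinomial

theorem map_intCast_trinomial {R : Type*} [CommRing R] (n : ℕ) (a b : ℤ) :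
    (X ^ n + C a * X + C b).map (algebraMap ℤ R) = X ^ n + C (a : R) * X + C (b : R) := by
  simp only [Polynomial.map_add, Polynomial.map_mul, Polynomial.map_pow, map_X, map_C,
    eq_intCast (algebraMap ℤ R)]

theorem natDegree_trinomial {R : Type*} [Semiring R] [Nontrivial R] {n : ℕ} (hn : 2 ≤ n) (a b : R) :
    (X ^ n + C a * X + C b).natDegree = n := by
  have hdeg : (C a * X + C b).degree < (X ^ n : R[X]).degree := by
    rw [degree_X_pow]
    exact degree_linear_lt.trans_le (mod_cast hn)
  rw [add_assoc, natDegree_add_eq_left_of_degree_lt hdeg, natDegree_X_pow]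

theorem monic_trinomial {R : Type*} [Semiring R] {n : ℕ} (hn : 2 ≤ n) (a b : R) :
    (X ^ n + C a * X + C b).Monic := by
  rw [add_assoc]
  exact monic_X_pow_add (degree_linear_lt.trans_le (mod_cast hn))

theorem irreducible_trinomial {R : Type*} [CommRing R] [IsDomain R] {n : ℕ} (hn : 2 ≤ n)
    {p a b : R} (hp : Prime p) (ha : p ∣ a) (hb : p ∣ b) (hb' : ¬ p ^ 2 ∣ b) :
    Irreducible (X ^ n + C a * X + C b) := by
  have hmonic := monic_trinomial hn a b
  have hcoeff : ∀ i, (X ^ n + C a * X + C b).coeff i =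
    (if i = n then 1 else 0) + a * (if 1 = i then 1 else 0) + (if i = 0 then b else 0) := by
    intro i
    simp only [coeff_add, coeff_X_pow, coeff_C_mul, coeff_X, coeff_C]
  have hprime : (Ideal.span {p}).IsPrime := (Ideal.span_singleton_prime hp.ne_zero).2 hp
  refine IsEisensteinAt.irreducible (𝓟 := Ideal.span {p}) ⟨?_, fun {i} hi => ?_, ?_⟩ hprime
    hmonic.isPrimitive (by rw [natDegree_trinomial hn]; omega)
  · rw [hmonic.leadingCoeff]
    exact hprime.one_notMem
  · rw [natDegree_trinomial hn] at hi
    rw [Ideal.mem_span_singleton, hcoeff, if_neg hi.ne, zero_add]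
    exact dvd_add (ha.mul_right _) (by split_ifs <;> simp [hb])
  · rw [Ideal.span_singleton_pow, Ideal.mem_span_singleton, hcoeff]
    simpa [show 0 ≠ n by omega] using hb'

theorem coeff_zero_trinomial_comp {R : Type*} [CommRing R] (n : ℕ) (a b : R) :
    ((X ^ n + C a * X + C b).comp (X - C 1)).coeff 0 = (-1) ^ n - a + b := by
  simp only [coeff_zero_eq_eval_zero, eval_comp, eval_add, eval_mul, eval_pow, eval_sub, eval_X,
    eval_C]
  ring

theorem coeff_one_trinomial_comp {R : Type*} [CommRing R] (n : ℕ) (a b : R) :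
    ((X ^ n + C a * X + C b).comp (X - C 1)).coeff 1 = n * (-1) ^ (n - 1) + a := by
  have hcoeff (f : R[X]) : f.coeff 1 = (derivative f).eval 0 := by
    simp [← coeff_zero_eq_eval_zero, coeff_derivative]
  rw [hcoeff, derivative_comp]
  simp [derivative_X_pow]

theorem map_trinomial_comp {k : ℕ} {a b : ℤ} (ha : Odd a) (hb : Even b) :
    ((X ^ (2 ^ k + 1) + C a * X + C b).comp (X - C 1)).map (Int.castRingHom (ZMod 2)) =
      X ^ 2 ^ k * (X - 1) := by
  have ha' : (a : ZMod 2) = 1 := ZMod.intCast_eq_one_iff_odd.2 ha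
  have hb' : (b : ZMod 2) = 0 := ZMod.intCast_eq_zero_iff_even.2 hb
  have hpow : (X - 1 : (ZMod 2)[X]) ^ 2 ^ k + 1 = X ^ 2 ^ k := by
    rw [sub_pow_char_pow, one_pow, sub_add_cancel]
  simp only [Polynomial.map_add, Polynomial.map_mul, Polynomial.map_pow, Polynomial.map_sub,
    Polynomial.map_one, map_X, map_C, add_comp, mul_comp, pow_comp, X_comp, C_comp,
    eq_intCast (Int.castRingHom (ZMod 2)), ha', hb', C_1, C_0]
  linear_combination (X - 1) * hpow

theorem exists_trinomial_comp_eq_threeSlopePoly {k : ℕ} (hk : 2 ≤ k) {a b : ℤ} (ha : a % 4 = 1)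
    (hb : b % 4 = 2) : ∃ (H : ℤ[X]) (e : ℤ), Odd (H.coeff 0) ∧
      (X ^ (2 ^ k + 1) + C a * X + C b).comp (X - C 1) = threeSlopePoly 2 (2 ^ k - 1) H e := by
  have hfour : 4 ∣ 2 ^ k := pow_dvd_pow 2 hk
  have hpos : 0 < 2 ^ k := by positivity
  have heven : Even (2 ^ k) := (by decide : Even 4).trans_dvd hfour
  obtain ⟨H, e, hHe⟩ := exists_eq_threeSlopePoly (p := 2) (s := 2 ^ k - 1)
    (G := (X ^ (2 ^ k + 1) + C a * X + C b).comp (X - C 1))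
    (by rw [Nat.sub_add_cancel hpos, map_trinomial_comp (by grind) (by grind)])
    (by rw [coeff_zero_trinomial_comp, heven.add_one.neg_one_pow]; push_cast; omega)
  refine ⟨H, e, ?_, hHe⟩
  have hone := coeff_one_trinomial_comp (2 ^ k + 1) a b
  rw [hHe, coeff_one_threeSlopePoly (by omega), add_tsub_cancel_right, heven.neg_one_pow] at hone
  rw [Int.odd_iff]
  push_cast at hone
  have : (4 : ℤ) ∣ 2 ^ k := mod_cast hfour
  omega

end Trinomial

theorem example_289_34_common_index_divisor_general {k : ℕ} (hk : 2 ≤ k) {a b : ℤ}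
    (ha : a % 4 = 1) (hb : b % 4 = 2)
    (hirr : Irreducible (X ^ (2 ^ k + 1) + C (a : ℚ) * X + C (b : ℚ)))
    {K : Type*} [Field K] [NumberField K] {θ : K}
    (hθ : aeval θ (X ^ (2 ^ k + 1) + C (a : ℚ) * X + C (b : ℚ)) = 0)
    (hgen : Algebra.adjoin ℚ {θ} = ⊤) :
    (∀ η : 𝓞 K, Algebra.adjoin ℚ {(η : K)} = ⊤ →
      2 ∣ (Algebra.adjoin ℤ {η} : Subalgebra ℤ (𝓞 K)).toSubring.toAddSubgroup.index) ∧
    ¬ ∃ η : 𝓞 K, Algebra.adjoin ℤ {η} = ⊤ := by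
  have hfour : 2 ^ 2 ≤ 2 ^ k := Nat.pow_le_pow_right two_pos hk
  have hmonic := monic_trinomial (n := 2 ^ k + 1) (by omega) a b
  rw [← map_intCast_trinomial, ← hmonic.irreducible_iff_irreducible_map_fraction_map] at hirr
  rw [← map_intCast_trinomial, aeval_map_algebraMap] at hθ
  obtain ⟨θ, rfl⟩ : ∃ θ' : 𝓞 K, (θ' : K) = θ := ⟨⟨θ, _, hmonic, hθ⟩, rfl⟩
  rw [aeval_algebraMap_eq_zero_iff] at hθ
  obtain ⟨H, e, hH, hHe⟩ := exists_trinomial_comp_eq_threeSlopePoly hk ha hb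
  have hrank : Module.finrank ℚ K = 2 ^ k - 1 + 2 := by
    rw [finrank_eq_natDegree_of_adjoin_eq_top hgen,
      minpoly_eq_of_irreducible_of_monic hirr hθ hmonic, natDegree_trinomial (by omega)]
    omega
  have hmin : minpoly ℤ (θ + 1) = threeSlopePoly 2 (2 ^ k - 1) H e := by
    rw [← hHe]
    exact minpoly_eq_of_irreducible_of_monic (irreducible_comp_X_sub_C hirr 1)
      (by simpa [aeval_comp] using hθ) (hmonic.comp_X_sub_C 1)
  have hdvd := dvd_index_of_minpoly_eq_threeSlopePoly (by omega) hH hmin hrank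
  exact ⟨fun η _ => hdvd η, fun ⟨η, hη⟩ =>
    adjoin_singleton_ne_top_of_dvd_index (by simp) (hdvd η) hη⟩

/-- `F(x) = x^9 + 289·x + 34` is irreducible over `ℚ`, and for the number field
`K = ℚ(θ)` it defines, `2` divides the index `(ℤ_K : ℤ[η])` for every algebraic
integer `η` generating `K`; in particular `K` is not monogenic. -/
theorem example_289_34_common_index_divisor :
    Irreducible (X ^ 9 + C (289 : ℚ) * X + C (34 : ℚ)) ∧
    ∀ (K : Type) [Field K] [NumberField K] (θ : K),
      Polynomial.aeval θ (X ^ 9 + C (289 : ℚ) * X + C (34 : ℚ)) = 0 →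
      Algebra.adjoin ℚ {θ} = ⊤ →
      ((∀ η : 𝓞 K, Algebra.adjoin ℚ {(η : K)} = ⊤ →
          2 ∣ (Algebra.adjoin ℤ {η} : Subalgebra ℤ (𝓞 K)).toSubring.toAddSubgroup.index) ∧
        ¬ ∃ η : 𝓞 K, Algebra.adjoin ℤ {η} = ⊤) := by
  have hirr : Irreducible (X ^ 9 + C ((289 : ℤ) : ℚ) * X + C ((34 : ℤ) : ℚ)) := by
    rw [← map_intCast_trinomial,
      ← (monic_trinomial (by norm_num) _ _).irreducible_iff_irreducible_map_fraction_map]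
    exact irreducible_trinomial (p := 17) (by norm_num) (by norm_num) (by norm_num) (by norm_num)
      (by norm_num)
  exact ⟨hirr, fun K _ _ θ hθ hgen => example_289_34_common_index_divisor_general (k := 3)
    (by norm_num) (a := 289) (by norm_num) (b := 34) (by norm_num) hirr hθ hgen⟩
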